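/- Lemma 7: Let U₅ = 1 + η₂ + 2η₁ + 3η₀. If d > 3 is a prime divisor of gcd(U₅, (4^p − 1)/3), then one of the following holds: (1) d = 11; (2) d = 1 + 2p and 3p = 4(1+4y)² + 3; (3) d = 1 + 6p and 7p = 4(1+4y)² − 1; (4) d = 1 + 8p and p = 4(1+4y)² + 1. -/

import Mathlib

open Finset

/-- The cyclotomic class `D_i` of order 4 modulo `p` with respect to the
primitive root `θ`: `{θ^(i+4j) mod p : 0 ≤ j < (p-1)/4}`. -/
def cycD (p θ i : ℕ) : Finset ℕ :=
  (Finset.range ((p - 1) / 4)).image fun j => θ ^ (i + 4 * j) % p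

/-- `η_i = Σ_{t ∈ D_i} 4^t` as an integer. -/
def eta4 (p θ : ℕ) (i : ℕ) : ℤ := ∑ t ∈ cycD p θ i, (4 : ℤ) ^ t

/-- `H = η₀ + η₂ − η₁ − η₃`. -/
def Hval (p θ : ℕ) : ℤ := eta4 p θ 0 + eta4 p θ 2 - eta4 p θ 1 - eta4 p θ 3

/-- the imaginary unit -/
abbrev gI : GaussianInt := ⟨0, 1⟩

lemma gI2 : gI ^ 2 = -1 := by decide
lemma gI4 : gI ^ 4 = 1 := by decide

lemma gI_pow_inj (n i : ℕ) (hi : i < 4) (h : gI ^ n = gI ^ i) : n % 4 = i := by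
  have h1 : gI ^ n = gI ^ (n % 4) := by
    conv_lhs => rw [← Nat.div_add_mod n 4, pow_add, pow_mul, gI4, one_pow, one_mul]
  rw [h1] at h
  have : n % 4 < 4 := Nat.mod_lt _ (by norm_num)
  revert h this
  generalize n % 4 = m
  intro h hm
  interval_cases m <;> interval_cases i <;> first | rfl | (revert h; decide)

section
variable {p : ℕ} [Fact p.Prime] {θ : ℕ}

lemma gen_exists (hθ : IsPrimitiveRoot (θ : ZMod p) (p - 1)) {a : ZMod p} (ha : a ≠ 0) :
    ∃ n < p - 1, a = (θ : ZMod p) ^ n := by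
  have hp1 : 0 < p - 1 := by have := (Fact.out : p.Prime).two_le; omega
  have : NeZero (p - 1) := ⟨hp1.ne'⟩
  obtain ⟨n, hn, h⟩ := hθ.eq_pow_of_pow_eq_one (ZMod.pow_card_sub_one_eq_one ha)
  exact ⟨n, hn, h.symm⟩

lemma exists_chi (hp8 : p % 8 = 5) (hθ : IsPrimitiveRoot (θ : ZMod p) (p - 1)) :
    ∃ χ : MulChar (ZMod p) GaussianInt, χ (θ : ZMod p) = gI := by
  have hp1 : 0 < p - 1 := by have := (Fact.out : p.Prime).two_le; omega
  have hu : IsUnit (θ : ZMod p) := hθ.isUnit hp1.ne'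
  let μ : GaussianIntˣ := ⟨gI, -gI, by decide, by decide⟩
  have hμ : μ ∈ rootsOfUnity (Fintype.card (ZMod p)ˣ) GaussianInt := by
    rw [mem_rootsOfUnity, ZMod.card_units]
    ext1
    obtain ⟨k, hk⟩ : ∃ k, p - 1 = 4 * k := ⟨(p-1)/4, by omega⟩
    rw [hk, pow_mul]
    have : μ ^ 4 = 1 := by ext1; exact gI4
    rw [this, one_pow]
  have hg : ∀ x, x ∈ Subgroup.zpowers hu.unit := by
    intro x
    obtain ⟨n, _, h⟩ := gen_exists hθ x.ne_zero
    refine ⟨n, ?_⟩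
    ext1
    simp [h]
  exact ⟨MulChar.ofRootOfUnity hμ hg, MulChar.ofRootOfUnity_spec hμ hg⟩

variable {χ : MulChar (ZMod p) GaussianInt}

lemma chi_cases (hθ : IsPrimitiveRoot (θ : ZMod p) (p - 1))
    (hχ : χ (θ : ZMod p) = gI) (a : ZMod p) (ha : a ≠ 0) :
    χ a = 1 ∨ χ a = gI ∨ χ a = gI ^ 2 ∨ χ a = gI ^ 3 := by
  obtain ⟨n, -, rfl⟩ := gen_exists hθ ha
  rw [map_pow, hχ]
  have h1 : gI ^ n = gI ^ (n % 4) := by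
    conv_lhs => rw [← Nat.div_add_mod n 4, pow_add, pow_mul, gI4, one_pow, one_mul]
  rw [h1]
  have : n % 4 < 4 := Nat.mod_lt _ (by norm_num)
  generalize n % 4 = m at *
  interval_cases m <;> decide

lemma chi_neg_one (hp8 : p % 8 = 5) (hθ : IsPrimitiveRoot (θ : ZMod p) (p - 1))
    (hχ : χ (θ : ZMod p) = gI) : χ (-1) = -1 := by
  have h2 : (-1 : ZMod p) = (θ : ZMod p) ^ ((p - 1) / 2) := by
    have h : ((θ : ZMod p) ^ ((p - 1) / 2)) ^ 2 = 1 := by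
      rw [← pow_mul, show (p - 1) / 2 * 2 = p - 1 by omega, hθ.pow_eq_one]
    rcases mul_self_eq_one_iff.mp ((sq _).symm.trans h) with h | h
    · exact absurd h (hθ.pow_ne_one_of_pos_of_lt (by omega) (by omega))
    · exact h.symm
  rw [h2, map_pow, hχ, show (p - 1) / 2 = 4 * ((p - 1) / 8) + 2 by omega, pow_add, pow_mul, gI4,
    one_pow, one_mul, gI2]

lemma mem_cycD (hp8 : p % 8 = 5) (hθ : IsPrimitiveRoot (θ : ZMod p) (p - 1))
    (hχ : χ (θ : ZMod p) = gI) (i : ℕ) (hi : i < 4) (t : ℕ) :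
    t ∈ cycD p θ i ↔ t < p ∧ χ (t : ZMod p) = gI ^ i := by
  simp only [cycD, mem_image, mem_range]
  constructor
  · rintro ⟨j, hj, rfl⟩
    refine ⟨Nat.mod_lt _ (Fact.out : p.Prime).pos, ?_⟩
    rw [ZMod.natCast_mod, Nat.cast_pow, map_pow, hχ, pow_add, pow_mul, gI4, one_pow, mul_one]
  · rintro ⟨ht, h⟩
    have h0 : (t : ZMod p) ≠ 0 := by
      intro h0
      rw [h0, MulChar.map_zero] at h
      revert h
      interval_cases i <;> decide
    obtain ⟨n, hn, hn'⟩ := gen_exists hθ h0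
    rw [hn', map_pow, hχ] at h
    have h3 := gI_pow_inj n i hi h
    refine ⟨n / 4, by omega, ?_⟩
    rw [show i + 4 * (n / 4) = n by omega]
    have : ((θ ^ n : ℕ) : ZMod p) = (t : ℕ) := by rw [hn']; push_cast; rfl
    rw [ZMod.natCast_eq_natCast_iff'] at this
    rw [this, Nat.mod_eq_of_lt ht]

lemma sum_cycD {M : Type*} [AddCommMonoid M] (hp8 : p % 8 = 5)
    (hθ : IsPrimitiveRoot (θ : ZMod p) (p - 1))
    (hχ : χ (θ : ZMod p) = gI) (i : ℕ) (hi : i < 4) (F : ℕ → M) :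
    ∑ t ∈ cycD p θ i, F t = ∑ a : ZMod p, if χ a = gI ^ i then F a.val else 0 := by
  rw [← Finset.sum_filter]
  symm
  refine Finset.sum_bij (fun a _ => a.val) ?_ ?_ ?_ ?_
  · intro a ha
    rw [mem_cycD hp8 hθ hχ i hi]
    simp only [mem_filter, mem_univ, true_and] at ha
    exact ⟨ZMod.val_lt a, by rw [ZMod.natCast_zmod_val]; exact ha⟩
  · intro a _ b _ h
    exact ZMod.val_injective p h
  · intro t ht
    rw [mem_cycD hp8 hθ hχ i hi] at ht
    exact ⟨(t : ZMod p), by simpa using ht.2, ZMod.val_natCast_of_lt ht.1⟩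
  · intros; rfl

/-- Gauss and Jacobi sums relations for a quartic character. -/
lemma gauss_rel {F : Type*} [Field F] (χ : MulChar (ZMod p) F) (ψ : AddChar (ZMod p) F)
    (hψ : ψ.IsPrimitive) (h4 : χ ^ 4 = 1) (h2 : χ ^ 2 ≠ 1) (hm : χ (-1) = -1) :
    gaussSum χ ψ * gaussSum (χ ^ 3) ψ = -(p : F) ∧
    gaussSum (χ ^ 2) ψ ^ 2 = (p : F) ∧
    gaussSum (χ ^ 2) ψ * jacobiSum χ χ = gaussSum χ ψ ^ 2 ∧
    gaussSum (χ ^ 2) ψ * jacobiSum (χ ^ 3) (χ ^ 3) = gaussSum (χ ^ 3) ψ ^ 2 ∧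
    gaussSum (χ ^ 3) ψ * jacobiSum χ (χ ^ 2) = gaussSum χ ψ * gaussSum (χ ^ 2) ψ := by
  have h1 : χ ≠ 1 := by rintro rfl; simp at h2
  have h33 : χ ^ 3 * χ ^ 3 = χ ^ 2 := by
    rw [← pow_add, show 3 + 3 = 4 + 2 by rfl, pow_add, h4, one_mul]
  have h3 : χ ^ 3 ≠ 1 := by intro h; rw [h, one_mul] at h33; exact h2 h33.symm
  have hinv : χ⁻¹ = χ ^ 3 := inv_eq_of_mul_eq_one_right (by rw [← pow_succ', h4])
  have hinv2 : (χ ^ 2)⁻¹ = χ ^ 2 := inv_eq_of_mul_eq_one_right (by rw [← pow_add, h4])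
  have key : ∀ ξ : MulChar (ZMod p) F, ξ ≠ 1 →
      gaussSum ξ ψ * gaussSum ξ⁻¹ ψ = ξ (-1) * (p : F) := by
    intro ξ hξ
    have e := gaussSum_mul_gaussSum_eq_card hξ hψ
    rw [ZMod.card] at e
    rw [← e, ← mul_gaussSum_inv_eq_gaussSum ξ⁻¹ ψ, MulChar.inv_apply', inv_neg, inv_one]
    ring
  refine ⟨?_, ?_, ?_, ?_, ?_⟩
  · have := key χ h1
    rwa [hinv, hm, neg_one_mul] at this
  · have := key _ h2
    rw [hinv2, MulChar.pow_apply' _ two_ne_zero, hm] at this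
    rw [sq, this]; ring
  · rw [sq (χ), jacobiSum_mul_nontrivial (by rwa [← sq]), sq]
  · rw [← h33, jacobiSum_mul_nontrivial (by rwa [h33]), sq]
  · rw [show χ ^ 3 = χ * χ ^ 2 by rw [← pow_succ'],
      jacobiSum_mul_nontrivial (by rwa [← pow_succ'])]

lemma chi_pow4 (hθ : IsPrimitiveRoot (θ : ZMod p) (p - 1))
    (hχ : χ (θ : ZMod p) = gI) : χ ^ 4 = 1 := by
  refine MulChar.ext fun a => ?_
  rw [MulChar.pow_apply' _ (by norm_num), MulChar.one_apply_coe]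
  rcases chi_cases hθ hχ a a.ne_zero with h | h | h | h <;> rw [h] <;> decide

lemma comp_ne {F : Type*} [Field F] (φ : GaussianInt →+* F) (h2 : (2 : F) ≠ 0)
    (hχ : χ (θ : ZMod p) = gI) : (χ ^ 2).ringHomComp φ ≠ 1 := by
  intro h
  have hu : IsUnit (θ : ZMod p) := by
    by_contra hu
    rw [MulChar.map_nonunit _ hu] at hχ
    revert hχ; decide
  have := DFunLike.congr_fun h (θ : ZMod p)
  rw [MulChar.ringHomComp_apply, MulChar.pow_apply' _ two_ne_zero, hχ, gI2, MulChar.one_apply hu,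
    map_neg, map_one] at this
  apply h2
  linear_combination -this

lemma gauss_rel' {F : Type*} [Field F] (φ : GaussianInt →+* F) (h2 : (2 : F) ≠ 0)
    (hp8 : p % 8 = 5) (hθ : IsPrimitiveRoot (θ : ZMod p) (p - 1))
    (hχ : χ (θ : ZMod p) = gI) (ψ : AddChar (ZMod p) F) (hψ : ψ.IsPrimitive) :
    gaussSum (χ.ringHomComp φ) ψ * gaussSum ((χ ^ 3).ringHomComp φ) ψ = -(p : F) ∧
    gaussSum ((χ ^ 2).ringHomComp φ) ψ ^ 2 = (p : F) ∧
    gaussSum ((χ ^ 2).ringHomComp φ) ψ * φ (jacobiSum χ χ) = gaussSum (χ.ringHomComp φ) ψ ^ 2 ∧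
    gaussSum ((χ ^ 2).ringHomComp φ) ψ * φ (jacobiSum (χ ^ 3) (χ ^ 3)) =
      gaussSum ((χ ^ 3).ringHomComp φ) ψ ^ 2 ∧
    gaussSum ((χ ^ 3).ringHomComp φ) ψ * φ (jacobiSum χ (χ ^ 2)) =
      gaussSum (χ.ringHomComp φ) ψ * gaussSum ((χ ^ 2).ringHomComp φ) ψ := by
  have := gauss_rel (χ.ringHomComp φ) ψ hψ
    (by rw [MulChar.ringHomComp_pow, chi_pow4 hθ hχ, MulChar.ringHomComp_one])
    (by rw [MulChar.ringHomComp_pow]; exact comp_ne φ h2 hχ)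
    (by rw [MulChar.ringHomComp_apply, chi_neg_one hp8 hθ hχ, map_neg, map_one])
  simpa only [MulChar.ringHomComp_pow, jacobiSum_ringHomComp] using this

lemma chi3_star (hθ : IsPrimitiveRoot (θ : ZMod p) (p - 1))
    (hχ : χ (θ : ZMod p) = gI) (a : ZMod p) : (χ ^ 3) a = star (χ a) := by
  rw [MulChar.pow_apply' _ (by norm_num)]
  rcases eq_or_ne a 0 with rfl | ha
  · rw [MulChar.map_zero]; decide
  · rcases chi_cases hθ hχ a ha with h | h | h | h <;> rw [h] <;> decide

lemma chi2_star (hθ : IsPrimitiveRoot (θ : ZMod p) (p - 1))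
    (hχ : χ (θ : ZMod p) = gI) (a : ZMod p) : (χ ^ 2) a = star ((χ ^ 2) a) := by
  rw [MulChar.pow_apply' _ (by norm_num)]
  rcases eq_or_ne a 0 with rfl | ha
  · rw [MulChar.map_zero]; decide
  · rcases chi_cases hθ hχ a ha with h | h | h | h <;> rw [h] <;> decide

lemma jac3 (hθ : IsPrimitiveRoot (θ : ZMod p) (p - 1)) (hχ : χ (θ : ZMod p) = gI) :
    jacobiSum (χ ^ 3) (χ ^ 3) = star (jacobiSum χ χ) := by
  simp only [jacobiSum, star_sum, star_mul', chi3_star hθ hχ]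

lemma jac32 (hθ : IsPrimitiveRoot (θ : ZMod p) (p - 1)) (hχ : χ (θ : ZMod p) = gI) :
    jacobiSum (χ ^ 3) (χ ^ 2) = star (jacobiSum χ (χ ^ 2)) := by
  simp only [jacobiSum, star_sum, star_mul', chi3_star hθ hχ, ← chi2_star hθ hχ]

lemma jac_main (hp8 : p % 8 = 5) (hθ : IsPrimitiveRoot (θ : ZMod p) (p - 1))
    (hχ : χ (θ : ZMod p) = gI) :
    jacobiSum χ χ * star (jacobiSum χ χ) = p ∧ jacobiSum χ (χ ^ 2) = - jacobiSum χ χ := by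
  have hp0 : (p : ℂ) ≠ 0 := by exact_mod_cast (Fact.out : p.Prime).ne_zero
  let φ : GaussianInt →+* ℂ := GaussianInt.toComplex
  have hφ : Function.Injective φ := fun a b h => GaussianInt.toComplex_inj.mp h
  have hψ := AddChar.zmodChar_primitive_of_primitive_root p
    (Complex.isPrimitiveRoot_exp p (Fact.out : p.Prime).ne_zero)
  obtain ⟨e1, e2, e3, e4, e5⟩ := gauss_rel' φ two_ne_zero hp8 hθ hχ _ hψ
  rw [jac3 hθ hχ] at e4
  generalize gaussSum (χ.ringHomComp φ) _ = G1 at *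
  generalize gaussSum ((χ ^ 2).ringHomComp φ) _ = H at *
  generalize gaussSum ((χ ^ 3).ringHomComp φ) _ = G3 at *
  have hH : H ≠ 0 := by rintro rfl; apply hp0; rw [← e2]; ring
  constructor
  · apply hφ
    rw [map_mul, map_natCast]
    apply mul_left_cancel₀ hp0
    generalize φ (jacobiSum χ χ) = a at *
    generalize φ (star (jacobiSum χ χ)) = b at *
    have : (H * a) * (H * b) = (G1 * G3) ^ 2 := by rw [e3, e4]; ring
    rw [e1] at this
    rw [← e2] at this ⊢
    linear_combination this
  · apply hφ
    rw [map_neg]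
    apply mul_left_cancel₀ (mul_ne_zero hp0 hH)
    linear_combination (-G1 * H) * e5 + H * φ (jacobiSum χ (χ ^ 2)) * e1 - G1 ^ 2 * e2 + p * e3

lemma ind0 (hθ : IsPrimitiveRoot (θ : ZMod p) (p - 1)) (hχ : χ (θ : ZMod p) = gI) (a : ZMod p) :
    4 * (if χ a = gI ^ 0 then 1 else 0 : GaussianInt) =
      (1 : MulChar (ZMod p) GaussianInt) a + χ a + (χ ^ 2) a + (χ ^ 3) a := by
  rw [MulChar.pow_apply' _ (by norm_num), MulChar.pow_apply' _ (by norm_num)]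
  rcases eq_or_ne a 0 with rfl | ha
  · rw [MulChar.map_zero, MulChar.map_zero]; decide
  · rw [MulChar.one_apply ha.isUnit]
    rcases chi_cases hθ hχ a ha with h | h | h | h <;> rw [h] <;> decide

lemma ind1 (hθ : IsPrimitiveRoot (θ : ZMod p) (p - 1)) (hχ : χ (θ : ZMod p) = gI) (a : ZMod p) :
    4 * (if χ a = gI ^ 1 then 1 else 0 : GaussianInt) =
      (1 : MulChar (ZMod p) GaussianInt) a - gI * χ a - (χ ^ 2) a + gI * (χ ^ 3) a := by
  rw [MulChar.pow_apply' _ (by norm_num), MulChar.pow_apply' _ (by norm_num)]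
  rcases eq_or_ne a 0 with rfl | ha
  · rw [MulChar.map_zero, MulChar.map_zero]; decide
  · rw [MulChar.one_apply ha.isUnit]
    rcases chi_cases hθ hχ a ha with h | h | h | h <;> rw [h] <;> decide

lemma count_eq (hp8 : p % 8 = 5) (hθ : IsPrimitiveRoot (θ : ZMod p) (p - 1))
    (hχ : χ (θ : ZMod p) = gI) :
    16 * (((cycD p θ 0).filter (fun a => (a + 1) % p ∈ cycD p θ 1)).card : ℤ)
        = (p : ℤ) + 1 - 2 * (jacobiSum χ χ).re - 4 * (jacobiSum χ χ).im := by
  have hm := chi_neg_one hp8 hθ hχ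
  have c1 : (((cycD p θ 0).filter (fun a => (a + 1) % p ∈ cycD p θ 1)).card : GaussianInt) =
      ∑ a : ZMod p, (if χ a = gI ^ 0 then 1 else 0) * (if χ (a + 1) = gI ^ 1 then 1 else 0) := by
    rw [Finset.card_filter, Nat.cast_sum, sum_cycD hp8 hθ hχ 0 (by norm_num)]
    refine Finset.sum_congr rfl fun a _ => ?_
    have : ((a.val + 1) % p ∈ cycD p θ 1) ↔ χ (a + 1) = gI ^ 1 := by
      rw [mem_cycD hp8 hθ hχ 1 (by norm_num), ZMod.natCast_mod]
      push_cast
      rw [ZMod.natCast_zmod_val]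
      exact and_iff_right (Nat.mod_lt _ (Fact.out : p.Prime).pos)
    simp only [this]
    split_ifs <;> simp
  have c2 : (16 : GaussianInt) *
      (((cycD p θ 0).filter (fun a => (a + 1) % p ∈ cycD p θ 1)).card : GaussianInt) =
      ∑ a : ZMod p, ((1 : MulChar (ZMod p) GaussianInt) a - χ a + (χ ^ 2) a - (χ ^ 3) a) *
       ((1 : MulChar (ZMod p) GaussianInt) (1 - a) - gI * χ (1 - a) - (χ ^ 2) (1 - a)
        + gI * (χ ^ 3) (1 - a)) := by
    rw [c1, Finset.mul_sum, ← Equiv.sum_comp (Equiv.neg (ZMod p))]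
    refine Finset.sum_congr rfl fun a _ => ?_
    rw [Equiv.neg_apply]
    have i0 := ind0 hθ hχ (-a)
    have i1 := ind1 hθ hχ (-a + 1)
    have n1 : (1 : MulChar (ZMod p) GaussianInt) (-a) = (1 : MulChar (ZMod p) GaussianInt) a := by
      rw [neg_eq_neg_one_mul a, map_mul, MulChar.one_apply isUnit_one.neg, one_mul]
    have n2 : χ (-a) = - χ a := by rw [neg_eq_neg_one_mul a, map_mul, hm, neg_one_mul]
    have n3 : (χ ^ 2) (-a) = (χ ^ 2) a := by
      rw [MulChar.pow_apply' _ (by norm_num), MulChar.pow_apply' _ (by norm_num), n2]; ring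
    have n4 : (χ ^ 3) (-a) = - (χ ^ 3) a := by
      rw [MulChar.pow_apply' _ (by norm_num), MulChar.pow_apply' _ (by norm_num), n2]; ring
    rw [neg_add_eq_sub] at i1 ⊢
    generalize (if χ (-a) = gI ^ 0 then 1 else 0 : GaussianInt) = u at *
    rw [n1, n2, n3, n4] at i0
    rw [← i1]
    linear_combination (4 * (if χ (1 - a) = gI ^ 1 then 1 else 0 : GaussianInt)) * i0
  have h4 := chi_pow4 hθ hχ
  have h2 : χ ^ 2 ≠ 1 := by
    intro h
    have e := comp_ne GaussianInt.toComplex two_ne_zero hχ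
    rw [h, MulChar.ringHomComp_one] at e
    exact e rfl
  have h1 : χ ≠ 1 := by rintro rfl; simp at h2
  have h33 : χ ^ 3 * χ ^ 3 = χ ^ 2 := by
    rw [← pow_add, show 3 + 3 = 4 + 2 by rfl, pow_add, h4, one_mul]
  have h3 : χ ^ 3 ≠ 1 := by intro h; rw [h, one_mul] at h33; exact h2 h33.symm
  have hinv : χ⁻¹ = χ ^ 3 := inv_eq_of_mul_eq_one_right (by rw [← pow_succ', h4])
  have hinv2 : (χ ^ 2)⁻¹ = χ ^ 2 := inv_eq_of_mul_eq_one_right (by rw [← pow_add, h4])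
  obtain ⟨-, j12⟩ := jac_main hp8 hθ hχ
  have j00 : jacobiSum (1 : MulChar (ZMod p) GaussianInt) 1 = p - 2 := by
    rw [jacobiSum_one_one, ZMod.card]
  have j01 := jacobiSum_one_nontrivial h1
  have j02 := jacobiSum_one_nontrivial h2
  have j03 := jacobiSum_one_nontrivial h3
  have j10 := j01; rw [jacobiSum_comm] at j10
  have j20 := j02; rw [jacobiSum_comm] at j20
  have j30 := j03; rw [jacobiSum_comm] at j30
  have j21 := j12; rw [jacobiSum_comm] at j21
  have j13 := jacobiSum_nontrivial_inv h1
  rw [hinv, hm, neg_neg] at j13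
  have j31 := j13; rw [jacobiSum_comm] at j31
  have j22 := jacobiSum_nontrivial_inv h2
  rw [hinv2, MulChar.pow_apply' _ two_ne_zero, hm] at j22
  have j33 := jac3 hθ hχ
  have j32 := jac32 hθ hχ
  rw [j12, star_neg] at j32
  have j23 := j32; rw [jacobiSum_comm] at j23
  have c3 : (16 : GaussianInt) *
      (((cycD p θ 0).filter (fun a => (a + 1) % p ∈ cycD p θ 1)).card : GaussianInt) =
      p + 1 + 2 * gI * (jacobiSum χ χ - star (jacobiSum χ χ))
        - (jacobiSum χ χ + star (jacobiSum χ χ)) := by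
    rw [c2]
    have : ∑ a : ZMod p, ((1 : MulChar (ZMod p) GaussianInt) a - χ a + (χ ^ 2) a - (χ ^ 3) a) *
       ((1 : MulChar (ZMod p) GaussianInt) (1 - a) - gI * χ (1 - a) - (χ ^ 2) (1 - a)
        + gI * (χ ^ 3) (1 - a)) =
       jacobiSum (1 : MulChar (ZMod p) GaussianInt) 1 - gI * jacobiSum 1 χ - jacobiSum 1 (χ ^ 2)
        + gI * jacobiSum 1 (χ ^ 3)
       - (jacobiSum χ 1 - gI * jacobiSum χ χ - jacobiSum χ (χ ^ 2) + gI * jacobiSum χ (χ ^ 3))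
       + (jacobiSum (χ ^ 2) 1 - gI * jacobiSum (χ ^ 2) χ - jacobiSum (χ ^ 2) (χ ^ 2)
          + gI * jacobiSum (χ ^ 2) (χ ^ 3))
       - (jacobiSum (χ ^ 3) 1 - gI * jacobiSum (χ ^ 3) χ - jacobiSum (χ ^ 3) (χ ^ 2)
          + gI * jacobiSum (χ ^ 3) (χ ^ 3)) := by
      simp only [jacobiSum, Finset.mul_sum, ← Finset.sum_add_distrib, ← Finset.sum_sub_distrib]
      refine Finset.sum_congr rfl fun a _ => ?_
      ring
    rw [this, j00, j01, j02, j03, j10, j20, j30, j12, j21, j13, j31, j22, j33, j32, j23]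
    ring
  have c4 := congrArg Zsqrtd.re c3
  simp at c4
  linarith

lemma uniq (hp : p.Prime) (x y s c : ℤ) (hx : x % 4 = 1) (hs : s % 4 = 1)
    (h1 : (p : ℤ) = x ^ 2 + 4 * y ^ 2) (h2 : (p : ℤ) = s ^ 2 + 4 * c ^ 2) :
    s = x ∧ (c = y ∨ c = -y) := by
  have hP : Prime (p : ℤ) := Nat.prime_iff_prime_int.mp hp
  have hpos : (0 : ℤ) < p := by exact_mod_cast hp.pos
  have key : ∀ y : ℤ, (p : ℤ) = x ^ 2 + 4 * y ^ 2 → (p : ℤ) ∣ x * c - s * y → s = x ∧ c = y := by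
    intro y h1 hdv
    have hid : (p : ℤ) ^ 2 = (x * s + 4 * y * c) ^ 2 + 4 * (x * c - s * y) ^ 2 := by
      rw [sq (p : ℤ)]; nth_rw 1 [h1]; rw [h2]; ring
    have h0 : x * c - s * y = 0 := by
      obtain ⟨k, hk⟩ := hdv
      rw [hk] at hid ⊢
      by_contra hne
      have hk0 : k ≠ 0 := by rintro rfl; simp at hne
      have : 1 ≤ k ^ 2 := by have := sq_pos_of_ne_zero hk0; omega
      have hpp : 0 < (p : ℤ) ^ 2 := by positivity
      nlinarith [sq_nonneg (x * s + 4 * y * c)]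
    rw [h0] at hid
    have h3 : (x * s + 4 * y * c) ^ 2 = (p : ℤ) ^ 2 := by rw [hid]; ring
    have hs' : s * p = x * (x * s + 4 * y * c) := by rw [h1]; linear_combination (-4 * y) * h0
    have hc' : c * p = y * (x * s + 4 * y * c) := by rw [h1]; linear_combination x * h0
    rcases sq_eq_sq_iff_eq_or_eq_neg.mp h3 with h | h
    · rw [h] at hs' hc'
      exact ⟨mul_right_cancel₀ hpos.ne' hs', mul_right_cancel₀ hpos.ne' hc'⟩
    · rw [h] at hs'
      have : s = -x := mul_right_cancel₀ hpos.ne' (by rw [hs']; ring)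
      omega
  have hd : (p : ℤ) ∣ (x * c - s * y) * (x * c + s * y) := by
    refine ⟨c ^ 2 - y ^ 2, ?_⟩
    linear_combination (-c ^ 2) * h1 + y ^ 2 * h2
  rcases hP.dvd_or_dvd hd with h | h
  · have := key y h1 h
    exact ⟨this.1, Or.inl this.2⟩
  · have := key (-y) (by rw [h1]; ring) (by rw [show x * c - s * -y = x * c + s * y by ring]; exact h)
    exact ⟨this.1, Or.inr this.2⟩

lemma jac_im (hp8 : p % 8 = 5) (hθ : IsPrimitiveRoot (θ : ZMod p) (p - 1))
    (hχ : χ (θ : ZMod p) = gI) (x y : ℤ) (hx : x % 4 = 1) (hxy : (p : ℤ) = x ^ 2 + 4 * y ^ 2)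
    (hy : 16 * (((cycD p θ 0).filter (fun a => (a + 1) % p ∈ cycD p θ 1)).card : ℤ)
        = (p : ℤ) + 1 + 2 * x - 8 * y) :
    (jacobiSum χ χ).im = 2 * y := by
  have h1 := count_eq hp8 hθ hχ
  have h2 := congrArg Zsqrtd.re (jac_main hp8 hθ hχ).1
  simp at h2
  generalize (jacobiSum χ χ).im = m at *
  generalize (jacobiSum χ χ).re = S at *
  generalize (((cycD p θ 0).filter (fun a => (a + 1) % p ∈ cycD p θ 1)).card : ℤ) = N at *
  have hS : (S + 2 * m) % 4 = 3 := by omega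
  have hme : m % 2 = 0 := by
    have hS2 : S % 2 = 1 := by omega
    by_contra hmo
    have hm2 : m % 2 = 1 := by omega
    obtain ⟨u, hu⟩ : ∃ u, S = 2 * u + 1 := ⟨S / 2, by omega⟩
    obtain ⟨v, hv⟩ : ∃ v, m = 2 * v + 1 := ⟨m / 2, by omega⟩
    have : (p : ℤ) = 2 * (2 * u * u + 2 * u + 2 * v * v + 2 * v + 1) := by
      rw [← h2, hu, hv]; ring
    omega
  obtain ⟨c, rfl⟩ : ∃ c, m = 2 * c := ⟨m / 2, by omega⟩
  obtain ⟨hs, hc⟩ := uniq (Fact.out) x y (-S) c hx (by omega) hxy (by rw [← h2]; ring)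
  omega

lemma gauss_eta {F : Type*} [Field F] (φ : GaussianInt →+* F)
    (hp8 : p % 8 = 5) (hθ : IsPrimitiveRoot (θ : ZMod p) (p - 1))
    (hχ : χ (θ : ZMod p) = gI) (h4 : (4 : F) ^ p = 1) (j : ℕ) :
    gaussSum ((χ ^ j).ringHomComp φ) (AddChar.zmodChar p h4) =
      (eta4 p θ 0 : F) + φ gI ^ j * (eta4 p θ 1 : F) + φ gI ^ (2 * j) * (eta4 p θ 2 : F)
        + φ gI ^ (3 * j) * (eta4 p θ 3 : F) := by
  have e : ∀ i < 4, (eta4 p θ i : F) =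
      ∑ a : ZMod p, if χ a = gI ^ i then (4 : F) ^ a.val else 0 := by
    intro i hi
    rw [eta4, Int.cast_sum, sum_cycD hp8 hθ hχ i hi]
    refine Finset.sum_congr rfl fun a _ => ?_
    push_cast; rfl
  rw [e 0 (by norm_num), e 1 (by norm_num), e 2 (by norm_num), e 3 (by norm_num)]
  simp only [gaussSum, Finset.mul_sum, ← Finset.sum_add_distrib]
  refine Finset.sum_congr rfl fun a _ => ?_
  rw [MulChar.ringHomComp_apply, AddChar.zmodChar_apply]
  rcases eq_or_ne a 0 with rfl | ha
  · rw [MulChar.map_zero, MulChar.map_zero, if_neg (by decide), if_neg (by decide),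
      if_neg (by decide), if_neg (by decide)]
    simp
  · have hu : (χ ^ j) a = χ a ^ j := by
      have := MulChar.pow_apply_coe χ j (Units.mk0 a ha)
      simpa using this
    rw [hu]
    rcases chi_cases hθ hχ a ha with h | h | h | h <;> rw [h]
    · rw [if_pos (by decide), if_neg (by decide),
      if_neg (by decide), if_neg (by decide)]; simp
    · rw [if_neg (by decide), if_pos (by decide),
      if_neg (by decide), if_neg (by decide)]; simp
    · rw [if_neg (by decide), if_neg (by decide),
      if_pos (by decide), if_neg (by decide)]; simp only [map_pow, ← pow_mul]; ring
    · rw [if_neg (by decide), if_neg (by decide),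
      if_neg (by decide), if_pos (by decide)]; simp only [map_pow, ← pow_mul]; ring

lemma field_rel {F : Type*} [Field F] [IsAlgClosed F] (h2 : (2 : F) ≠ 0)
    (hp8 : p % 8 = 5) (hθ : IsPrimitiveRoot (θ : ZMod p) (p - 1))
    (h4 : IsPrimitiveRoot (4 : F) p)
    (x y : ℤ) (hx : x % 4 = 1) (hxy : (p : ℤ) = x ^ 2 + 4 * y ^ 2)
    (hy : 16 * (((cycD p θ 0).filter (fun a => (a + 1) % p ∈ cycD p θ 1)).card : ℤ)
        = (p : ℤ) + 1 + 2 * x - 8 * y)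
    (hU : ((1 + eta4 p θ 2 + 2 * eta4 p θ 1 + 3 * eta4 p θ 0 : ℤ) : F) = 0) :
    (((5 * (p : ℤ) + 1) ^ 2 - 4 * p * (1 + 4 * y) ^ 2 : ℤ) : F) = 0 := by
  obtain ⟨χ, hχ⟩ := exists_chi hp8 hθ
  obtain ⟨i, hi⟩ := IsAlgClosed.exists_pow_nat_eq (-1 : F) (n := 2) (by norm_num)
  let φ : GaussianInt →+* F := Zsqrtd.lift ⟨i, by rw [← sq, hi]; simp⟩
  have hφ : ∀ z, φ z = z.re + z.im * i := fun z => rfl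
  have hφI : φ gI = i := by rw [hφ]; simp
  have h4' := h4.pow_eq_one
  have hψ : (AddChar.zmodChar p h4').IsPrimitive :=
    AddChar.zmodChar_primitive_of_primitive_root p h4
  obtain ⟨e1, e2, e3, e4, -⟩ := gauss_rel' φ h2 hp8 hθ hχ _ hψ
  have g0 := gauss_eta φ hp8 hθ hχ h4' 0
  have g1 := gauss_eta φ hp8 hθ hχ h4' 1
  have g2 := gauss_eta φ hp8 hθ hχ h4' 2
  have g3 := gauss_eta φ hp8 hθ hχ h4' 3
  rw [pow_zero, MulChar.ringHomComp_one, gaussSum_one_left (by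
    intro h
    have := (AddChar.zmod_char_ne_one_iff p (AddChar.zmodChar p h4')).not_left.mp (by simpa using h)
    have h1 := AddChar.zmodChar_apply' h4' 1
    rw [Nat.cast_one, this, pow_one] at h1
    exact h4.ne_one (Fact.out : p.Prime).one_lt h1.symm)] at g0
  rw [pow_one] at g1
  rw [jac3 hθ hχ] at e4
  have hm := jac_im hp8 hθ hχ x y hx hxy hy
  rw [hφ] at e3 e4
  simp only [Zsqrtd.re_star, Zsqrtd.im_star, hm] at e3 e4
  rw [g1, g2] at e3
  rw [g1, g3] at e1
  rw [g2] at e2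
  rw [g2, g3] at e4
  simp only [hφI] at *
  push_cast at *
  have i0 : i ≠ 0 := by rintro rfl; simp at hi
  have i3 : i ^ 3 = -i := by linear_combination i * hi
  have i4 : i ^ 4 = 1 := by linear_combination (i ^ 2 - 1) * hi
  have i6 : i ^ 6 = -1 := by linear_combination (i ^ 4 - i ^ 2 + 1) * hi
  have i9 : i ^ 9 = i := by
    linear_combination (i ^ 7 - i ^ 5 + i ^ 3 - i) * hi
  norm_num [hi, i3, i4, i6, i9] at e1 e2 e3 e4 g0
  generalize (eta4 p θ 0 : F) = n0 at *
  generalize (eta4 p θ 1 : F) = n1 at *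
  generalize (eta4 p θ 2 : F) = n2 at *
  generalize (eta4 p θ 3 : F) = n3 at *
  generalize ((jacobiSum χ χ).re : F) = S at *
  generalize (y : F) = Y at *
  generalize (p : F) = P at *
  set H := n0 - n1 + n2 - n3 with hH
  have hAB : (n0 - n2) * (n1 - n3) = Y * H := by
    apply mul_left_cancel₀ (mul_ne_zero (mul_ne_zero h2 h2) i0)
    rw [hH]
    linear_combination e4 - e3
  have hAA : (n0 - n2) ^ 2 + (n1 - n3) ^ 2 = - P := by
    linear_combination e1 + (n1 - n3) ^ 2 * hi
  have hHH : H ^ 2 = P := by rw [hH, ← e2]; ring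
  have hS : 2 * ((n0 - n2) + (n1 - n3)) = 1 - H := by
    rw [hH]; linear_combination 2 * hU + 3 * g0
  have h5 : 2 * H * (1 + 4 * Y) = 5 * P + 1 := by
    have := congrArg (· ^ 2) hS
    linear_combination this - 4 * hAA - 8 * hAB + hHH
  have := congrArg (· ^ 2) h5
  linear_combination -this + 4 * (1 + 4 * Y) ^ 2 * hHH

end

lemma arith (P d x y : ℤ) (hP5 : 5 ≤ P) (hP8 : P % 8 = 5) (hx : x % 4 = 1)
    (hxy : P = x ^ 2 + 4 * y ^ 2) (k : ℤ) (hk : 1 ≤ k) (hd : d = 1 + 2 * k * P)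
    (hne : d % 8 = 5 → d ≠ 1 + 4 * P)
    (hdv : d ∣ (5 * P + 1) ^ 2 - 4 * P * (1 + 4 * y) ^ 2) :
    d = 11 ∨ (d = 1 + 2 * P ∧ 3 * P = 4 * (1 + 4 * y) ^ 2 + 3) ∨
      (d = 1 + 6 * P ∧ 7 * P = 4 * (1 + 4 * y) ^ 2 - 1) ∨
      (d = 1 + 8 * P ∧ P = 4 * (1 + 4 * y) ^ 2 + 1) := by
  obtain ⟨e, he⟩ := hdv
  have hx1 : 1 ≤ x ^ 2 := by
    have h0 : x ≠ 0 := by rintro rfl; simp at hx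
    have := sq_pos_of_ne_zero h0
    omega
  have hdpos : 0 < d := by rw [hd]; nlinarith [mul_pos (by linarith : 0 < k) (by linarith : 0 < P)]
  have hW : 0 < (5 * P + 1) ^ 2 - 4 * P * (1 + 4 * y) ^ 2 := by
    have : 0 < P * (25 * P + 10 - 4 * (1 + 4 * y) ^ 2) := by
      apply mul_pos (by linarith)
      nlinarith [sq_nonneg (y - 1), sq_nonneg y]
    nlinarith
  have hepos : 0 < e := by
    rw [he] at hW
    exact pos_of_mul_pos_right hW hdpos.le
  -- e = 1 + l P
  obtain ⟨l, hl⟩ : ∃ l, e = 1 + l * P := by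
    refine ⟨25 * P + 10 - 4 * (1 + 4 * y) ^ 2 - 2 * k * e, ?_⟩
    rw [hd] at he
    linear_combination -he
  have hP0 : P ≠ 0 := by linarith
  have hmain : 2 * k + l + 2 * k * l * P = 25 * P + 10 - 4 * (1 + 4 * y) ^ 2 := by
    apply mul_left_cancel₀ hP0
    rw [hl, hd] at he
    linear_combination -he
  obtain ⟨r, hr⟩ : ∃ r, P = 8 * r + 5 := ⟨P / 8, by omega⟩
  have h16 : (16 : ℤ) ∣ e := by
    have h1 : (16 : ℤ) ∣ d * e := by
      rw [← he, hr]
      refine ⟨100 * r ^ 2 + 130 * r + 42 - 2 * r - 1 - (8 * r + 5) * (2 * y + 4 * y ^ 2), ?_⟩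
      ring
    have hc : IsCoprime (16 : ℤ) d := by
      have : IsCoprime (2 : ℤ) d := ⟨-(k * P), 1, by rw [hd]; ring⟩
      have := this.pow_left (m := 4)
      norm_num at this
      exact this
    exact hc.dvd_of_dvd_mul_left h1
  have hl8 : l % 8 = 3 := by
    obtain ⟨w, hw⟩ := h16
    have : 5 * l + 1 = 8 * (2 * w - l * r) := by
      rw [hw, hr] at hl
      linear_combination -hl
    omega
  have hl0 : 0 ≤ l := by
    by_contra h
    have : l ≤ -1 := by omega
    nlinarith
  have hl3 : 3 ≤ l := by omega
  have hodd : 1 ≤ (1 + 4 * y) ^ 2 := by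
    have h0 : 1 + 4 * y ≠ 0 := by omega
    have := sq_pos_of_ne_zero h0
    omega
  have hkl : k * l ≤ 12 := by
    by_contra h
    have : 13 ≤ k * l := by omega
    nlinarith
  have hk4 : k ≤ 4 := by nlinarith
  have hl12 : l ≤ 12 := by nlinarith
  have hl' : l = 3 ∨ l = 11 := by omega
  rcases hl' with rfl | rfl
  · interval_cases k
    · left
      have h1 : 19 * P = 4 * (1 + 4 * y) ^ 2 - 5 := by linarith
      have hy : (3 * y - 5) * (y - 1) ≤ 0 := by nlinarith
      have : y = 1 := by
        have : 1 ≤ y := by nlinarith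
        have : y < 2 := by nlinarith
        omega
      subst this
      rw [hd]; linarith
    · exfalso
      apply hne _ (by rw [hd]; ring)
      rw [hd]; omega
    · right; right; left
      exact ⟨by rw [hd]; ring, by linarith⟩
    · right; right; right
      exact ⟨by rw [hd]; ring, by linarith⟩
  · have : k = 1 := by omega
    subst this
    right; left
    exact ⟨by rw [hd]; ring, by linarith⟩

theorem lemma7
    (p : ℕ) (hp : p.Prime) (hp8 : p % 8 = 5)
    (x y : ℤ) (hx : x % 4 = 1) (hxy : (p : ℤ) = x ^ 2 + 4 * y ^ 2)
    (θ : ℕ) (hθ : IsPrimitiveRoot (θ : ZMod p) (p - 1))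
    (hy : 16 * (((cycD p θ 0).filter (fun a => (a + 1) % p ∈ cycD p θ 1)).card : ℤ)
        = (p : ℤ) + 1 + 2 * x - 8 * y)
    (d : ℤ) (hd : Prime d) (hd3 : 3 < d)
    (hdvd : d ∣ (Int.gcd (1 + eta4 p θ 2 + 2 * eta4 p θ 1 + 3 * eta4 p θ 0) (((4 : ℤ) ^ p - 1) / 3) : ℤ)) :
    d = 11 ∨ (d = 1 + 2 * (p : ℤ) ∧ 3 * (p : ℤ) = 4 * (1 + 4 * y) ^ 2 + 3) ∨
      (d = 1 + 6 * (p : ℤ) ∧ 7 * (p : ℤ) = 4 * (1 + 4 * y) ^ 2 - 1) ∨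
      (d = 1 + 8 * (p : ℤ) ∧ (p : ℤ) = 4 * (1 + 4 * y) ^ 2 + 1) := by
  have : Fact p.Prime := ⟨hp⟩
  have hU := hdvd.trans (Int.gcd_dvd_left _ _)
  have hV := hdvd.trans (Int.gcd_dvd_right _ _)
  have h3 : (3 : ℤ) ∣ 4 ^ p - 1 := by
    have := sub_dvd_pow_sub_pow (4 : ℤ) 1 p
    norm_num at this
    exact this
  have hV' : d ∣ 4 ^ p - 1 := hV.trans (Int.ediv_dvd_of_dvd h3)
  lift d to ℕ using by linarith with n
  have hn : n.Prime := Nat.prime_iff_prime_int.mpr hd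
  have : Fact n.Prime := ⟨hn⟩
  have hn3 : 3 < n := by exact_mod_cast hd3
  have h4pow : (4 : ZMod n) ^ p = 1 := by
    have := (ZMod.intCast_zmod_eq_zero_iff_dvd _ n).mpr hV'
    push_cast at this
    linear_combination this
  have hc3 : (3 : ZMod n) ≠ 0 := by
    intro h
    have : ((3 : ℕ) : ZMod n) = 0 := by exact_mod_cast h
    rw [ZMod.natCast_eq_zero_iff] at this
    have := Nat.le_of_dvd (by norm_num) this
    omega
  have hc2 : (2 : ZMod n) ≠ 0 := by
    intro h
    have : ((2 : ℕ) : ZMod n) = 0 := by exact_mod_cast h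
    rw [ZMod.natCast_eq_zero_iff] at this
    have := Nat.le_of_dvd (by norm_num) this
    omega
  have h4ne : (4 : ZMod n) ≠ 1 := by
    intro h; apply hc3; linear_combination h
  have hord : orderOf (4 : ZMod n) = p := orderOf_eq_prime h4pow h4ne
  have hpn : p ∣ n - 1 := by
    rw [← hord]
    exact ZMod.orderOf_dvd_card_sub_one (by
      rw [show (4 : ZMod n) = 2 * 2 by norm_num]; exact mul_ne_zero hc2 hc2)
  have hprim : IsPrimitiveRoot (4 : ZMod n) p := hord ▸ IsPrimitiveRoot.orderOf _
  let F := AlgebraicClosure (ZMod n)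
  have hinj : Function.Injective (algebraMap (ZMod n) F) := (algebraMap (ZMod n) F).injective
  have hprimF : IsPrimitiveRoot (4 : F) p := by
    have := hprim.map_of_injective hinj
    rwa [show algebraMap (ZMod n) F 4 = 4 from map_ofNat _ 4] at this
  have h2F : (2 : F) ≠ 0 := by
    intro h; apply hc2; apply hinj
    rw [show algebraMap (ZMod n) F 2 = 2 from map_ofNat _ 2, h, map_zero]
  have hUF : ((1 + eta4 p θ 2 + 2 * eta4 p θ 1 + 3 * eta4 p θ 0 : ℤ) : F) = 0 := by
    have := congrArg (algebraMap (ZMod n) F) ((ZMod.intCast_zmod_eq_zero_iff_dvd _ n).mpr hU)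
    rwa [map_intCast, map_zero] at this
  have hW := field_rel h2F hp8 hθ hprimF x y hx hxy hy hUF
  have hW' : (n : ℤ) ∣ (5 * (p : ℤ) + 1) ^ 2 - 4 * p * (1 + 4 * y) ^ 2 := by
    rw [← ZMod.intCast_zmod_eq_zero_iff_dvd]
    apply hinj
    rw [map_intCast, map_zero]
    exact hW
  have hnodd : n % 2 = 1 := hn.eq_two_or_odd.resolve_left (by omega)
  have h2pn : 2 * p ∣ n - 1 := by
    refine Nat.Coprime.mul_dvd_of_dvd_of_dvd ?_ (by omega) hpn
    rw [Nat.coprime_two_left]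
    exact Nat.odd_iff.mpr (by omega)
  obtain ⟨k, hk⟩ := h2pn
  have hk0 : 1 ≤ k := by
    rcases Nat.eq_zero_or_pos k with rfl | h
    · omega
    · exact h
  refine arith p n x y (by omega) (by omega) hx hxy k (by exact_mod_cast hk0) ?_ ?_ hW'
  · have : n = 1 + 2 * p * k := by omega
    rw [this]; push_cast; ring
  · intro h8 heq
    have heq' : n / 2 = 2 * p := by omega
    have hsq : IsSquare (2 : ZMod n) := by
      rw [ZMod.euler_criterion n hc2, heq', pow_mul]
      rw [← h4pow]; norm_num
    rw [ZMod.exists_sq_eq_two_iff (by omega)] at hsq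
    omega
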